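/- There exists C > 0 such that for every differentiable u : ℝ³ → ℂ with u, ∇u ∈ L²(ℝ³): setting ŵ(p) = ∫_{ℝ³} e^{−ip·x}|u(x)|² dx, the kernel M_u(k,l) = (k·l)·B₀(k)·B₀(l)·ŵ(k+l) is square-integrable on ℝ³×ℝ³ with (∫∫_{ℝ³×ℝ³} |M_u(k,l)|² dk dl)^{1/2} ≤ C ‖u‖_{H¹}². -/

import Mathlib

open MeasureTheory
open scoped ENNReal

noncomputable section

/-- The dispersion relation `ω(k) = √(1+|k|²)` of the massive scalar field. -/
def ω (k : EuclideanSpace ℝ (Fin 3)) : ℝ := Real.sqrt (1 + ‖k‖ ^ 2)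

/-- The Gross dressing form factor `B₀(k) = 1/(√(ω(k))·(|k|²+ω(k)))`. -/
def B0 (k : EuclideanSpace ℝ (Fin 3)) : ℝ := 1 / (Real.sqrt (ω k) * (‖k‖ ^ 2 + ω k))

/-- The square of the `H¹`-norm, `‖u‖_{H¹}² = ‖u‖_{L²}² + ‖∇u‖_{L²}²`. -/
def H1sq (u : EuclideanSpace ℝ (Fin 3) → ℂ) : ℝ :=
  (∫ x, ‖u x‖ ^ 2) + ∫ x, ‖fderiv ℝ u x‖ ^ 2

/-- The `H¹`-norm of `u`. -/
def H1norm (u : EuclideanSpace ℝ (Fin 3) → ℂ) : ℝ := Real.sqrt (H1sq u)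

/-- `ŵ(p) = ∫ e^{−ip·x}|u(x)|² dx`. -/
def what (u : EuclideanSpace ℝ (Fin 3) → ℂ) (p : EuclideanSpace ℝ (Fin 3)) : ℂ :=
  ∫ x, Complex.exp (-(Complex.I * ((inner ℝ p x : ℝ) : ℂ))) * ((‖u x‖ ^ 2 : ℝ) : ℂ)

/-- The Bogoliubov kernel `M_u(k,l) = (k·l)·B₀(k)·B₀(l)·ŵ(k+l)`. -/
def Mker (u : EuclideanSpace ℝ (Fin 3) → ℂ) (k l : EuclideanSpace ℝ (Fin 3)) : ℂ :=
  (((inner ℝ k l : ℝ) * B0 k * B0 l : ℝ) : ℂ) * what u (k + l)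

/-!
Since `|u|²` and its gradient are integrable, `|ŵ(p)| ≤ 2‖u‖²_{H¹} / ω(p)`, and `|k| B₀(k)` is at
most `ω(k)^{-3/2}`. Hence `|M_u(k,l)|²` is dominated, up to a constant, by
`ω(k)⁻³ ω(l)⁻³ ω(k+l)⁻²`. Instead of the Hardy–Littlewood–Sobolev inequality, AM-GM trades this
product for the products of `ω⁻⁴` at any two of the momenta `k`, `l`, `k + l`. A measure-preserving
shear turns each of them into a tensor product, and `ω⁻⁴` is integrable on `ℝ³`.
-/

section FourierDecay

open scoped FourierTransform

variable {V E : Type*} [NormedAddCommGroup V] [InnerProductSpace ℝ V] [FiniteDimensional ℝ V]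
  [MeasurableSpace V] [BorelSpace V] [NormedAddCommGroup E] [NormedSpace ℂ E]

lemma norm_fourier_le_integral_norm (f : V → E) (ξ : V) : ‖𝓕 f ξ‖ ≤ ∫ x, ‖f x‖ :=
  VectorFourier.norm_fourierIntegral_le_integral_norm _ _ _ _ _

lemma two_pi_mul_norm_mul_norm_fourier_le {f : V → E} (hf : Differentiable ℝ f)
    (hint : Integrable f) (hint' : Integrable (fderiv ℝ f)) (ξ : V) :
    2 * Real.pi * ‖ξ‖ * ‖𝓕 f ξ‖ ≤ ∫ x, ‖fderiv ℝ f x‖ :=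
  calc 2 * Real.pi * ‖ξ‖ * ‖𝓕 f ξ‖
      = ‖𝓕 (fderiv ℝ f) ξ‖ := by
        rw [Real.fourier_fderiv hint hf hint', VectorFourier.norm_fourierSMulRight,
          neg_apply, norm_neg, innerSL_apply_norm]
    _ ≤ ∫ x, ‖fderiv ℝ f x‖ := norm_fourier_le_integral_norm _ _

end FourierDecay

section PositionDensity

/-- The position density `|u|²`, regarded as complex-valued so that it has a Fourier transform. -/
def positionDensity {V F : Type*} [Norm F] (u : V → F) (x : V) : ℂ := ((‖u x‖ ^ 2 : ℝ) : ℂ)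

lemma norm_positionDensity {V F : Type*} [Norm F] (u : V → F) (x : V) :
    ‖positionDensity u x‖ = ‖u x‖ ^ 2 := by
  rw [positionDensity, Complex.norm_real, Real.norm_of_nonneg (sq_nonneg _)]

lemma integrable_positionDensity {V F : Type*} [MeasurableSpace V] {μ : Measure V}
    [NormedAddCommGroup F] {u : V → F} (hu : MemLp u 2 μ) : Integrable (positionDensity u) μ :=
  (hu.integrable_norm_pow two_ne_zero).ofReal

variable {V F : Type*} [NormedAddCommGroup V] [NormedSpace ℝ V] [NormedAddCommGroup F]
  [InnerProductSpace ℝ F] {u : V → F} {x : V}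

lemma hasFDerivAt_positionDensity {u' : V →L[ℝ] F} (hu : HasFDerivAt u u' x) :
    HasFDerivAt (positionDensity u) (Complex.ofRealCLM ∘L (2 • innerSL ℝ (u x) ∘L u')) x :=
  Complex.ofRealCLM.hasFDerivAt.comp x hu.norm_sq

lemma differentiable_positionDensity (hu : Differentiable ℝ u) :
    Differentiable ℝ (positionDensity u) :=
  fun x => (hasFDerivAt_positionDensity (hu x).hasFDerivAt).differentiableAt

lemma norm_fderiv_positionDensity_le (hu : DifferentiableAt ℝ u x) :
    ‖fderiv ℝ (positionDensity u) x‖ ≤ ‖u x‖ ^ 2 + ‖fderiv ℝ u x‖ ^ 2 :=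
  calc ‖fderiv ℝ (positionDensity u) x‖
      = ‖2 • innerSL ℝ (u x) ∘L fderiv ℝ u x‖ := by
        rw [(hasFDerivAt_positionDensity hu.hasFDerivAt).fderiv]
        exact Complex.ofRealLI.norm_toContinuousLinearMap_comp
    _ ≤ 2 * (‖innerSL ℝ (u x)‖ * ‖fderiv ℝ u x‖) := by
        rw [two_nsmul, two_mul]
        exact norm_add_le_of_le (ContinuousLinearMap.opNorm_comp_le _ _)
          (ContinuousLinearMap.opNorm_comp_le _ _)
    _ ≤ ‖u x‖ ^ 2 + ‖fderiv ℝ u x‖ ^ 2 := by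
        rw [innerSL_apply_norm, ← mul_assoc]
        exact two_mul_le_add_sq _ _

variable [MeasurableSpace V] {μ : Measure V}

lemma integrable_fderiv_positionDensity (hdiff : Differentiable ℝ u) (hu : MemLp u 2 μ)
    (hu' : MemLp (fderiv ℝ u) 2 μ) : Integrable (fderiv ℝ (positionDensity u)) μ := by
  have hmeas : AEStronglyMeasurable (fderiv ℝ (positionDensity u)) μ := by
    have hcont : Continuous fun p : F × (V →L[ℝ] F) =>
        Complex.ofRealCLM ∘L (2 • innerSL ℝ p.1 ∘L p.2) := by fun_prop
    have hpair : AEStronglyMeasurable (fun x => (u x, fderiv ℝ u x)) μ := hu.1.prodMk hu'.1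
    exact (hcont.comp_aestronglyMeasurable hpair).congr
      (.of_forall fun x => (hasFDerivAt_positionDensity (hdiff x).hasFDerivAt).fderiv.symm)
  exact ((hu.integrable_norm_pow two_ne_zero).add (hu'.integrable_norm_pow two_ne_zero)).mono'
    hmeas (.of_forall fun x => norm_fderiv_positionDensity_le (hdiff x))

end PositionDensity

section PairWeight

/-- The symmetric weight `g(x)g(y) + g(x)g(x+y) + g(y)g(x+y)`, in which `g` is evaluated at any two
of the three momenta `x`, `y`, `x + y`. -/
def pairWeight {G : Type*} [Add G] (g : G → ℝ) (q : G × G) : ℝ :=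
  g q.1 * g q.2 + g q.1 * g (q.1 + q.2) + g q.2 * g (q.1 + q.2)

lemma pairWeight_nonneg {G : Type*} [Add G] {g : G → ℝ} (hg : 0 ≤ g) : 0 ≤ pairWeight g :=
  fun _ => add_nonneg (add_nonneg (mul_nonneg (hg _) (hg _)) (mul_nonneg (hg _) (hg _)))
    (mul_nonneg (hg _) (hg _))

variable {G : Type*} [AddGroup G] [MeasurableSpace G] [MeasurableAdd₂ G] {μ : Measure G} [SFinite μ]
  [μ.IsAddLeftInvariant] [μ.IsAddRightInvariant]

lemma integrable_pairWeight {g : G → ℝ} (hg : Integrable g μ) :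
    Integrable (pairWeight g) (μ.prod μ) := by
  have hgg : Integrable (fun q : G × G => g q.1 * g q.2) (μ.prod μ) := hg.mul_prod hg
  have hfst : Integrable (fun q : G × G => g q.1 * g (q.1 + q.2)) (μ.prod μ) :=
    (measurePreserving_prod_add μ μ).integrable_comp_of_integrable hgg
  have hsnd : Integrable (fun q : G × G => g q.2 * g (q.1 + q.2)) (μ.prod μ) :=
    (measurePreserving_prod_add_swap_right μ μ).integrable_comp_of_integrable hgg
  exact (hgg.add hfst).add hsnd

end PairWeight

lemma lintegral_ofReal_rpow_half_le {α : Type*} [MeasurableSpace α] {μ : Measure α}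
    {f g : α → ℝ} {A : ℝ} (hA : 0 ≤ A) (hg : Integrable g μ) (hg0 : 0 ≤ g)
    (hfg : ∀ x, f x ≤ A ^ 2 * g x) :
    (∫⁻ x, ENNReal.ofReal (f x) ∂μ) ^ (1 / 2 : ℝ) ≤ ENNReal.ofReal (A * √(∫ x, g x ∂μ)) := by
  have hint : 0 ≤ ∫ x, g x ∂μ := integral_nonneg hg0
  calc (∫⁻ x, ENNReal.ofReal (f x) ∂μ) ^ (1 / 2 : ℝ)
      ≤ (∫⁻ x, ENNReal.ofReal (A ^ 2 * g x) ∂μ) ^ (1 / 2 : ℝ) := by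
        gcongr with x
        exact hfg x
    _ = ENNReal.ofReal (A ^ 2 * ∫ x, g x ∂μ) ^ (1 / 2 : ℝ) := by
        rw [← integral_const_mul, ofReal_integral_eq_lintegral_ofReal (hg.const_mul _)
          (.of_forall fun x => mul_nonneg (sq_nonneg A) (hg0 x))]
    _ = ENNReal.ofReal (A * √(∫ x, g x ∂μ)) := by
        rw [ENNReal.ofReal_rpow_of_nonneg (by positivity) (by norm_num), ← Real.sqrt_eq_rpow,
          Real.sqrt_mul (sq_nonneg A), Real.sqrt_sq hA]

lemma pow_three_mul_pow_three_mul_sq_le {R : Type*} [CommRing R] [LinearOrder R]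
    [IsStrictOrderedRing R] (x y z : R) :
    x ^ 3 * y ^ 3 * z ^ 2 ≤ x ^ 4 * y ^ 4 + x ^ 4 * z ^ 4 + y ^ 4 * z ^ 4 := by
  -- The left-hand side is `(xy)² · (xz)(yz)`, the right-hand side `(xy)⁴ + (xz)⁴ + (yz)⁴`.
  nlinarith [sq_nonneg ((x * y) ^ 2 - x * z * (y * z)), sq_nonneg ((x * z) ^ 2 - (y * z) ^ 2),
    sq_nonneg ((x * y) ^ 2), sq_nonneg ((x * z) ^ 2), sq_nonneg ((y * z) ^ 2)]

section FormFactor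

variable (k : EuclideanSpace ℝ (Fin 3))

lemma sq_ω : ω k ^ 2 = 1 + ‖k‖ ^ 2 := Real.sq_sqrt (by positivity)

lemma ω_pos : 0 < ω k := Real.sqrt_pos.2 (by positivity)

lemma one_le_ω : 1 ≤ ω k := Real.one_le_sqrt.2 (by simp)

lemma ω_le_one_add_norm : ω k ≤ 1 + ‖k‖ := sqrt_one_add_norm_sq_le k

lemma norm_sq_mul_B0_sq_le : ‖k‖ ^ 2 * B0 k ^ 2 ≤ (ω k)⁻¹ ^ 3 := by
  have hω := ω_pos k
  have hω_sq : ω k ^ 2 ≤ ‖k‖ ^ 2 + ω k := by linarith [sq_ω k, one_le_ω k]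
  calc ‖k‖ ^ 2 * B0 k ^ 2 = ‖k‖ ^ 2 / (ω k * (‖k‖ ^ 2 + ω k) ^ 2) := by
        rw [B0, div_pow, mul_pow, Real.sq_sqrt hω.le, one_pow, mul_one_div]
    _ ≤ ω k ^ 2 / (ω k * (ω k ^ 2) ^ 2) := by
        gcongr ?_ / (_ * ?_ ^ 2)
        linarith [sq_ω k]
    _ = (ω k)⁻¹ ^ 3 := by field_simp

lemma integrable_inv_ω_pow {n : ℕ} (hn : 3 < n) :
    Integrable fun p => (ω p)⁻¹ ^ n := by
  have h : Integrable fun p : EuclideanSpace ℝ (Fin 3) => (1 + ‖p‖ ^ 2) ^ (-(n : ℝ) / 2) :=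
    integrable_rpow_neg_one_add_norm_sq (by simpa using hn)
  refine h.congr (.of_forall fun p => ?_)
  dsimp only
  rw [← sq_ω, ← Real.rpow_natCast_mul (ω_pos p).le, inv_pow, ← Real.rpow_natCast,
    ← Real.rpow_neg (ω_pos p).le]
  congr 1
  push_cast
  ring

end FormFactor

section Kernel

open scoped FourierTransform

variable (u : EuclideanSpace ℝ (Fin 3) → ℂ)

lemma H1sq_nonneg : 0 ≤ H1sq u :=
  add_nonneg (integral_nonneg fun _ => sq_nonneg _) (integral_nonneg fun _ => sq_nonneg _)

lemma what_eq_fourier (p : EuclideanSpace ℝ (Fin 3)) :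
    what u p = 𝓕 (positionDensity u) ((2 * Real.pi)⁻¹ • p) := by
  rw [Real.fourier_eq', what]
  congr 1 with x
  rw [inner_smul_right, real_inner_comm p x, smul_eq_mul, positionDensity]
  congr 2
  push_cast
  field_simp

lemma norm_what_le (p : EuclideanSpace ℝ (Fin 3)) : ‖what u p‖ ≤ ∫ x, ‖u x‖ ^ 2 := by
  simpa only [what_eq_fourier, norm_positionDensity] using
    norm_fourier_le_integral_norm (positionDensity u) ((2 * Real.pi)⁻¹ • p)

variable {u}

lemma norm_mul_norm_what_le (hdiff : Differentiable ℝ u) (hu : MemLp u 2)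
    (hu' : MemLp (fderiv ℝ u) 2) (p : EuclideanSpace ℝ (Fin 3)) :
    ‖p‖ * ‖what u p‖ ≤ H1sq u := by
  have hu_sq := hu.integrable_norm_pow two_ne_zero
  have hu'_sq := hu'.integrable_norm_pow two_ne_zero
  have hint := integrable_fderiv_positionDensity hdiff hu hu'
  calc ‖p‖ * ‖what u p‖
      = 2 * Real.pi * ‖(2 * Real.pi)⁻¹ • p‖ *
          ‖𝓕 (positionDensity u) ((2 * Real.pi)⁻¹ • p)‖ := by
        rw [what_eq_fourier, norm_smul, Real.norm_of_nonneg (by positivity),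
          mul_inv_cancel_left₀ (by positivity)]
    _ ≤ ∫ x, ‖fderiv ℝ (positionDensity u) x‖ :=
        two_pi_mul_norm_mul_norm_fourier_le (differentiable_positionDensity hdiff)
          (integrable_positionDensity hu) hint _
    _ ≤ ∫ x, (‖u x‖ ^ 2 + ‖fderiv ℝ u x‖ ^ 2) :=
        integral_mono hint.norm (hu_sq.add hu'_sq)
          fun x => norm_fderiv_positionDensity_le (hdiff x)
    _ = H1sq u := integral_add hu_sq hu'_sq

lemma norm_what_le_mul_inv_ω (hdiff : Differentiable ℝ u) (hu : MemLp u 2)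
    (hu' : MemLp (fderiv ℝ u) 2) (p : EuclideanSpace ℝ (Fin 3)) :
    ‖what u p‖ ≤ 2 * H1sq u * (ω p)⁻¹ := by
  have hu_le : ∫ x, ‖u x‖ ^ 2 ≤ H1sq u :=
    le_add_of_nonneg_right (integral_nonneg fun _ => sq_nonneg _)
  rw [← div_eq_mul_inv, le_div_iff₀ (ω_pos p)]
  calc ‖what u p‖ * ω p ≤ ‖what u p‖ * (1 + ‖p‖) := by gcongr; exact ω_le_one_add_norm p
    _ = ‖what u p‖ + ‖p‖ * ‖what u p‖ := by ring
    _ ≤ H1sq u + H1sq u :=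
        add_le_add ((norm_what_le u p).trans hu_le) (norm_mul_norm_what_le hdiff hu hu' p)
    _ = 2 * H1sq u := (two_mul _).symm

lemma norm_Mker_le (k l : EuclideanSpace ℝ (Fin 3)) :
    ‖Mker u k l‖ ≤ ‖k‖ * |B0 k| * (‖l‖ * |B0 l|) * ‖what u (k + l)‖ := by
  rw [Mker, norm_mul, Complex.norm_real, Real.norm_eq_abs, abs_mul, abs_mul]
  calc |inner ℝ k l| * |B0 k| * |B0 l| * ‖what u (k + l)‖
      ≤ ‖k‖ * ‖l‖ * |B0 k| * |B0 l| * ‖what u (k + l)‖ := by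
        gcongr
        exact abs_real_inner_le_norm k l
    _ = ‖k‖ * |B0 k| * (‖l‖ * |B0 l|) * ‖what u (k + l)‖ := by ring

lemma norm_Mker_sq_le (hdiff : Differentiable ℝ u) (hu : MemLp u 2)
    (hu' : MemLp (fderiv ℝ u) 2) (k l : EuclideanSpace ℝ (Fin 3)) :
    ‖Mker u k l‖ ^ 2 ≤ (2 * H1sq u) ^ 2 * pairWeight (fun p => (ω p)⁻¹ ^ 4) (k, l) := by
  calc ‖Mker u k l‖ ^ 2
      ≤ (‖k‖ * |B0 k| * (‖l‖ * |B0 l|) * ‖what u (k + l)‖) ^ 2 := by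
        gcongr
        exact norm_Mker_le k l
    _ = ‖k‖ ^ 2 * B0 k ^ 2 * (‖l‖ ^ 2 * B0 l ^ 2) * ‖what u (k + l)‖ ^ 2 := by
        simp only [mul_pow, sq_abs]
    _ ≤ (ω k)⁻¹ ^ 3 * (ω l)⁻¹ ^ 3 * (2 * H1sq u * (ω (k + l))⁻¹) ^ 2 := by
        have hk := ω_pos k
        have hl := ω_pos l
        gcongr
        · exact norm_sq_mul_B0_sq_le k
        · exact norm_sq_mul_B0_sq_le l
        · exact norm_what_le_mul_inv_ω hdiff hu hu' (k + l)
    _ = (2 * H1sq u) ^ 2 * ((ω k)⁻¹ ^ 3 * (ω l)⁻¹ ^ 3 * (ω (k + l))⁻¹ ^ 2) := by ring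
    _ ≤ (2 * H1sq u) ^ 2 * pairWeight (fun p => (ω p)⁻¹ ^ 4) (k, l) := by
        gcongr
        exact pow_three_mul_pow_three_mul_sq_le _ _ _

end Kernel

/-- There is `C > 0` such that for every differentiable `u` with `u, ∇u ∈ L²`:
`(∬ |M_u(k,l)|² dk dl)^{1/2} ≤ C‖u‖_{H¹}²`. -/
theorem Mker_HilbertSchmidt_bound :
    ∃ C > 0, ∀ u : EuclideanSpace ℝ (Fin 3) → ℂ,
      Differentiable ℝ u → MemLp u 2 volume →
      MemLp (fun x => fderiv ℝ u x) 2 volume →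
      (∫⁻ q : EuclideanSpace ℝ (Fin 3) × EuclideanSpace ℝ (Fin 3),
          ENNReal.ofReal (‖Mker u q.1 q.2‖ ^ 2)) ^ (1 / 2 : ℝ) ≤
        ENNReal.ofReal (C * H1norm u ^ 2) := by
  set W := pairWeight fun p => (ω p)⁻¹ ^ 4
  have hW : Integrable W := integrable_pairWeight (integrable_inv_ω_pow (by norm_num))
  have hW_nonneg : 0 ≤ W := pairWeight_nonneg fun p => by positivity
  refine ⟨2 * √(∫ q, W q) + 1, by positivity, fun u hdiff hu hu' => ?_⟩
  have hH := H1sq_nonneg u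
  calc (∫⁻ q : EuclideanSpace ℝ (Fin 3) × EuclideanSpace ℝ (Fin 3),
        ENNReal.ofReal (‖Mker u q.1 q.2‖ ^ 2)) ^ (1 / 2 : ℝ)
      ≤ ENNReal.ofReal (2 * H1sq u * √(∫ q, W q)) :=
        lintegral_ofReal_rpow_half_le (by positivity) hW hW_nonneg
          fun q => norm_Mker_sq_le hdiff hu hu' q.1 q.2
    _ ≤ ENNReal.ofReal ((2 * √(∫ q, W q) + 1) * H1norm u ^ 2) := by
        rw [H1norm, Real.sq_sqrt hH]
        gcongr ENNReal.ofReal ?_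
        linarith

end
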